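/- arXiv:2206.09838 — 2 statements merged into one kernel-verified Lean document; each statement's English description precedes it below -/
import Mathlib

section
/- Let 𝒜 be a Riesz algebra with identity e possessing a set {p_i : i ∈ I} of pairwise orthogonal o-minimal idempotents such that sup{∑_{i∈F} p_i : F ⊆ I finite} = e and dim(p_i 𝒜 p_j) ≤ 1 for all i, j ∈ I. Let 𝔛 be an order complete Riesz 𝒜-module such that for every x ∈ 𝔛₊ one has sup{(∑_{i∈F} p_i)·x·(∑_{i∈G} p_i) : F, G ⊆ I finite} = e·x·e, and let D : 𝒜 → 𝔛 be a derivation. Then D is regular if and only if the family {∑_{i∈F} |D(p_i)| : F ⊆ I finite} is bounded above in 𝔛. -/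
/- STATEMENT 0 (Theorem LA): characterization of regularity of a derivation from a
   unital Riesz algebra with a full system of pairwise orthogonal o-minimal
   idempotents into an order complete Riesz module. -/

/-- A linear map between (pre-)ordered real modules is regular if it is a finite
linear combination of positive linear maps. -/
def IsRegularLinearMap {A B : Type*} [AddCommGroup A] [PartialOrder A] [Module ℝ A]
    [AddCommGroup B] [PartialOrder B] [Module ℝ B] (T : A →ₗ[ℝ] B) : Prop :=
  ∃ (n : ℕ) (c : Fin n → ℝ) (P : Fin n → (A →ₗ[ℝ] B)),
    (∀ i, ∀ a : A, 0 ≤ a → 0 ≤ P i a) ∧ T = ∑ i, c i • P i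

/-!
Write `a·x` for `L a x` and `x·a` for `R a x`. The compression `1·D(·)·1` differs from `D` by the
regular maps `a ↦ a·D 1` and `a ↦ D 1·a`, so it suffices to treat the compression, and by the
Riesz–Kantorovich theorem it is regular as soon as it maps each `[0, a]` to a set bounded above.
Such a bound may be tested on the corners `pᵢ·(·)·pⱼ`. If `0 ≤ b ≤ a`, one-dimensionality gives
`pᵢ b pⱼ = r • pᵢ a pⱼ` with `0 ≤ r ≤ 1`, and the Leibniz rule expresses the `(i, j)` corner of
`D b` through `r`, `D a`, `D pᵢ` and `D pⱼ`. All of these are controlled by `|D a|` and an upper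
bound `M` of the `|D pᵢ|`, uniformly in `b`, `i` and `j`. Conversely, if `D = P - Q` with `P` and
`Q` positive, then `∑ |D pᵢ| ≤ (P + Q) (∑ pᵢ) ≤ (P + Q) 1`.
-/

open Set
open scoped Pointwise

section RieszKantorovich

variable {𝕜 A X : Type*}

section Extension

variable [AddCommGroup A] [Lattice A] [IsOrderedAddMonoid A] [AddCommGroup X]

theorem exists_addMonoidHom_eq_of_add_of_nonneg {f : A → X}
    (hf : ∀ a b, 0 ≤ a → 0 ≤ b → f (a + b) = f a + f b) :
    ∃ S : A →+ X, ∀ a, 0 ≤ a → S a = f a := by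
  have map_zero : f 0 = 0 := by simpa using hf 0 0 le_rfl le_rfl
  have map_parts (x y : A) (hx : 0 ≤ x) (hy : 0 ≤ y) :
      f (x - y)⁺ - f (x - y)⁻ = f x - f y := by
    rw [sub_eq_sub_iff_add_eq_add, ← hf _ _ (posPart_nonneg _) hy,
      ← hf _ _ hx (negPart_nonneg _), ← sub_eq_sub_iff_add_eq_add.1 (posPart_sub_negPart (x - y))]
  refine ⟨AddMonoidHom.mk' (fun a ↦ f a⁺ - f a⁻) fun a b ↦ ?_, fun a ha ↦ ?_⟩
  · have add_eq : a + b = (a⁺ + b⁺) - (a⁻ + b⁻) := by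
      rw [add_sub_add_comm, posPart_sub_negPart, posPart_sub_negPart]
    rw [add_eq, map_parts _ _ (add_nonneg (posPart_nonneg a) (posPart_nonneg b))
      (add_nonneg (negPart_nonneg a) (negPart_nonneg b)),
      hf _ _ (posPart_nonneg a) (posPart_nonneg b), hf _ _ (negPart_nonneg a) (negPart_nonneg b),
      add_sub_add_comm]
  · simp [posPart_of_nonneg ha, negPart_of_nonneg ha, map_zero]

theorem exists_linearMap_eq_of_add_of_smul_of_nonneg [Ring 𝕜] [LinearOrder 𝕜]
    [IsOrderedAddMonoid 𝕜] [Module 𝕜 A] [PosSMulMono 𝕜 A] [Module 𝕜 X] {f : A → X}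
    (hadd : ∀ a b, 0 ≤ a → 0 ≤ b → f (a + b) = f a + f b)
    (hsmul : ∀ (r : 𝕜) a, 0 < r → 0 ≤ a → f (r • a) = r • f a) :
    ∃ S : A →ₗ[𝕜] X, ∀ a, 0 ≤ a → S a = f a := by
  obtain ⟨S, hS⟩ := exists_addMonoidHom_eq_of_add_of_nonneg hadd
  have smul_of_nonneg (r : 𝕜) (a : A) (hr : 0 < r) (ha : 0 ≤ a) : S (r • a) = r • S a := by
    rw [hS _ (smul_nonneg hr.le ha), hS a ha, hsmul r a hr ha]
  have smul_of_pos (r : 𝕜) (a : A) (hr : 0 < r) : S (r • a) = r • S a := by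
    rw [← posPart_sub_negPart a, smul_sub, map_sub, map_sub, smul_sub,
      smul_of_nonneg r _ hr (posPart_nonneg a), smul_of_nonneg r _ hr (negPart_nonneg a)]
  refine ⟨{ S with map_smul' := fun r a ↦ ?_ }, hS⟩
  change S (r • a) = r • S a
  rcases lt_trichotomy r 0 with hr | rfl | hr
  · simpa using smul_of_pos (-r) a (neg_pos.2 hr)
  · simp
  · exact smul_of_pos r a hr

theorem Icc_zero_add_Icc_zero {x y : A} (hx : 0 ≤ x) (hy : 0 ≤ y) :
    Icc 0 x + Icc 0 y = Icc 0 (x + y) := by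
  refine Subset.antisymm (by simpa using Icc_add_Icc_subset 0 x 0 y) fun b ⟨hb, hbxy⟩ ↦ ?_
  refine ⟨b ⊓ x, ⟨le_inf hb hx, inf_le_right⟩, b - b ⊓ x, ⟨sub_nonneg.2 inf_le_left, ?_⟩,
    add_sub_cancel _ _⟩
  rw [sub_le_iff_le_add', inf_add]
  exact le_inf (le_add_of_nonneg_right hy) hbxy

end Extension

variable [Field 𝕜] [LinearOrder 𝕜] [IsStrictOrderedRing 𝕜]
  [AddCommGroup A] [Lattice A] [IsOrderedAddMonoid A] [Module 𝕜 A] [PosSMulMono 𝕜 A]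
  [AddCommGroup X] [PartialOrder X] [IsOrderedAddMonoid X] [Module 𝕜 X] [PosSMulMono 𝕜 X]

theorem exists_linearMap_isLUB_image_Icc (T : A →ₗ[𝕜] X)
    (hT : ∀ a, 0 ≤ a → ∃ s, IsLUB (T '' Icc 0 a) s) :
    ∃ S : A →ₗ[𝕜] X, ∀ a, 0 ≤ a → IsLUB (T '' Icc 0 a) (S a) := by
  choose! f hf using hT
  have map_add (a b : A) (ha : 0 ≤ a) (hb : 0 ≤ b) : f (a + b) = f a + f b := by
    refine (hf _ (add_nonneg ha hb)).unique ?_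
    rw [← Icc_zero_add_Icc_zero ha hb, image_add]
    exact (hf a ha).add (hf b hb)
  have map_smul (r : 𝕜) (a : A) (hr : 0 < r) (ha : 0 ≤ a) : f (r • a) = r • f a := by
    have smul_Icc : r • Icc 0 a = Icc 0 (r • a) := by
      simpa using (OrderIso.smulRight hr).image_Icc 0 a
    refine (hf _ (smul_nonneg hr.le ha)).unique ?_
    rw [← smul_Icc, image_smul_set]
    exact (OrderIso.smulRight hr).isLUB_image'.2 (hf a ha)
  obtain ⟨S, hS⟩ := exists_linearMap_eq_of_add_of_smul_of_nonneg map_add map_smul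
  exact ⟨S, fun a ha ↦ hS a ha ▸ hf a ha⟩

end RieszKantorovich

namespace IsRegularLinearMap

variable {A B I : Type*} [AddCommGroup A] [PartialOrder A] [IsOrderedAddMonoid A] [Module ℝ A]

section PartialOrder

variable [AddCommGroup B] [PartialOrder B] [IsOrderedAddMonoid B] [Module ℝ B]

theorem of_monotone_sub {T P Q : A →ₗ[ℝ] B} (hP : Monotone P) (hQ : Monotone Q) (h : T = P - Q) :
    IsRegularLinearMap T := by
  refine ⟨2, ![1, -1], ![P, Q], Fin.forall_fin_two.2 ⟨?_, ?_⟩, ?_⟩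
  · exact (monotone_iff_map_nonneg P).1 hP
  · exact (monotone_iff_map_nonneg Q).1 hQ
  · simp [h, sub_eq_add_neg]

theorem exists_monotone_sub [IsOrderedModule ℝ B] {T : A →ₗ[ℝ] B} (hT : IsRegularLinearMap T) :
    ∃ P Q : A →ₗ[ℝ] B, Monotone P ∧ Monotone Q ∧ T = P - Q := by
  obtain ⟨n, c, P, hP, rfl⟩ := hT
  have monotone_sum (d : Fin n → ℝ) (hd : ∀ i, 0 ≤ d i) : Monotone ⇑(∑ i, d i • P i) := by
    refine (monotone_iff_map_nonneg _).2 fun a ha ↦ ?_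
    rw [LinearMap.sum_apply]
    exact Finset.sum_nonneg fun i _ ↦ smul_nonneg (hd i) (hP i a ha)
  refine ⟨∑ i, (c i)⁺ • P i, ∑ i, (c i)⁻ • P i, monotone_sum _ fun i ↦ posPart_nonneg _,
    monotone_sum _ fun i ↦ negPart_nonneg _, ?_⟩
  simp_rw [← Finset.sum_sub_distrib, ← sub_smul, posPart_sub_negPart]

theorem add [IsOrderedModule ℝ B] {S T : A →ₗ[ℝ] B} (hS : IsRegularLinearMap S)
    (hT : IsRegularLinearMap T) : IsRegularLinearMap (S + T) := by
  obtain ⟨P₁, Q₁, hP₁, hQ₁, rfl⟩ := hS.exists_monotone_sub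
  obtain ⟨P₂, Q₂, hP₂, hQ₂, rfl⟩ := hT.exists_monotone_sub
  exact of_monotone_sub (P := P₁ + P₂) (Q := Q₁ + Q₂) (hP₁.add hP₂) (hQ₁.add hQ₂)
    (sub_add_sub_comm P₁ Q₁ P₂ Q₂)

theorem flip_of_nonneg {E : Type*} [AddCommGroup E] [Lattice E] [IsOrderedAddMonoid E] [Module ℝ E]
    {L : A →ₗ[ℝ] E →ₗ[ℝ] B} (hL : ∀ a x, 0 ≤ a → 0 ≤ x → 0 ≤ L a x) (x : E) :
    IsRegularLinearMap (L.flip x) := by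
  have monotone_flip (y : E) (hy : 0 ≤ y) : Monotone (L.flip y) :=
    (monotone_iff_map_nonneg _).2 fun a ha ↦ hL a y ha hy
  refine of_monotone_sub (monotone_flip _ (posPart_nonneg x))
    (monotone_flip _ (negPart_nonneg x)) ?_
  rw [← map_sub, posPart_sub_negPart]

end PartialOrder

variable [AddCommGroup B] [Lattice B] [IsOrderedAddMonoid B] [Module ℝ B]

theorem bddAbove_sum_abs [IsOrderedModule ℝ B] {T : A →ₗ[ℝ] B} (hT : IsRegularLinearMap T)
    {p : I → A} {e : A} (hp : ∀ i, 0 ≤ p i) (hsum : ∀ F : Finset I, ∑ i ∈ F, p i ≤ e) :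
    BddAbove {y : B | ∃ F : Finset I, y = ∑ i ∈ F, |T (p i)|} := by
  obtain ⟨P, Q, hP, hQ, rfl⟩ := hT.exists_monotone_sub
  have abs_le (i : I) : |(P - Q) (p i)| ≤ (P + Q) (p i) := by
    have hPi := (monotone_iff_map_nonneg P).1 hP _ (hp i)
    have hQi := (monotone_iff_map_nonneg Q).1 hQ _ (hp i)
    rw [LinearMap.sub_apply, LinearMap.add_apply, abs_le', neg_sub]
    exact ⟨(sub_le_self _ hQi).trans (le_add_of_nonneg_right hQi),
      (sub_le_self _ hPi).trans (le_add_of_nonneg_left hPi)⟩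
  refine ⟨(P + Q) e, ?_⟩
  rintro _ ⟨F, rfl⟩
  calc ∑ i ∈ F, |(P - Q) (p i)|
      ≤ ∑ i ∈ F, (P + Q) (p i) := Finset.sum_le_sum fun i _ ↦ abs_le i
    _ = (P + Q) (∑ i ∈ F, p i) := (map_sum _ _ _).symm
    _ ≤ (P + Q) e := (hP.add hQ) (hsum F)

end IsRegularLinearMap

theorem isRegularLinearMap_of_bddAbove_image_Icc {A X : Type*}
    [AddCommGroup A] [Lattice A] [IsOrderedAddMonoid A] [Module ℝ A] [IsOrderedModule ℝ A]
    [AddCommGroup X] [PartialOrder X] [IsOrderedAddMonoid X] [Module ℝ X] [IsOrderedModule ℝ X]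
    (hX : ∀ S : Set X, S.Nonempty → BddAbove S → ∃ b, IsLUB S b) {T : A →ₗ[ℝ] X}
    (hT : ∀ a, 0 ≤ a → BddAbove (T '' Icc 0 a)) : IsRegularLinearMap T := by
  obtain ⟨S, hS⟩ := exists_linearMap_isLUB_image_Icc T fun a ha ↦
    hX _ ((nonempty_Icc.2 ha).image T) (hT a ha)
  refine .of_monotone_sub (P := S) (Q := S - T) ?_ ?_ (sub_sub_cancel S T).symm
  · exact (monotone_iff_map_nonneg S).2 fun a ha ↦ (hS a ha).1 ⟨0, ⟨le_rfl, ha⟩, map_zero T⟩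
  · exact (monotone_iff_map_nonneg (S - T)).2 fun a ha ↦
      sub_nonneg.2 ((hS a ha).1 ⟨a, ⟨ha, le_rfl⟩, rfl⟩)

theorem exists_smul_eq_of_le_of_mem_span_singleton {𝕜 V : Type*} [Field 𝕜] [LinearOrder 𝕜]
    [IsStrictOrderedRing 𝕜] [AddCommGroup V] [PartialOrder V] [IsOrderedAddMonoid V] [Module 𝕜 V]
    [IsOrderedModule 𝕜 V] {u v w : V} (hv : v ∈ Submodule.span 𝕜 {u})
    (hw : w ∈ Submodule.span 𝕜 {u}) (hv_nonneg : 0 ≤ v) (hvw : v ≤ w) :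
    ∃ r ∈ Icc (0 : 𝕜) 1, v = r • w := by
  obtain ⟨t, rfl⟩ := Submodule.mem_span_singleton.1 hv
  obtain ⟨s, rfl⟩ := Submodule.mem_span_singleton.1 hw
  rcases (hv_nonneg.trans hvw).eq_or_lt with hw_zero | hw_pos
  · exact ⟨0, by simp, by simpa using le_antisymm (hvw.trans_eq hw_zero.symm) hv_nonneg⟩
  · have : SMulPosStrictMono 𝕜 V := SMulPosMono.toSMulPosStrictMono
    have hs : s ≠ 0 := by rintro rfl; simp at hw_pos
    have eq_smul : t • u = (t / s) • s • u := by rw [smul_smul, div_mul_cancel₀ t hs]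
    refine ⟨t / s, ⟨?_, ?_⟩, eq_smul⟩
    · exact (smul_nonneg_iff_nonneg_of_pos_right hw_pos).1 (eq_smul ▸ hv_nonneg)
    · exact le_of_smul_le_smul_right (by rwa [← eq_smul, one_smul]) hw_pos

section Derivation

variable {𝕜 𝒜 𝔛 : Type*} [CommRing 𝕜] [Ring 𝒜] [Module 𝕜 𝒜] [AddCommGroup 𝔛] [Module 𝕜 𝔛]

/-- `𝔛` is an `𝒜`-bimodule with products `a·x = L a x` and `x·a = R a x`. The identity of `𝒜` is
not required to act as the identity of `𝔛`, so the compression `x ↦ 1·x·1` can be nontrivial. -/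
structure IsBimoduleAction (L R : 𝒜 →ₗ[𝕜] 𝔛 →ₗ[𝕜] 𝔛) : Prop where
  left_mul : ∀ a b x, L (a * b) x = L a (L b x)
  right_mul : ∀ a b x, R (a * b) x = R b (R a x)
  left_right_comm : ∀ a b x, L a (R b x) = R b (L a x)

/-- `D` satisfies the Leibniz rule `D (a b) = a·D b + D a·b` for the bimodule products
`a·x = L a x` and `x·a = R a x`. -/
def IsBimoduleDerivation (L R : 𝒜 →ₗ[𝕜] 𝔛 →ₗ[𝕜] 𝔛) (D : 𝒜 →ₗ[𝕜] 𝔛) : Prop :=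
  ∀ a b, D (a * b) = L a (D b) + R b (D a)

namespace IsBimoduleDerivation

variable {L R : 𝒜 →ₗ[𝕜] 𝔛 →ₗ[𝕜] 𝔛} {D : 𝒜 →ₗ[𝕜] 𝔛}

theorem corner_map_corner (hD : IsBimoduleDerivation L R D) (hLR : IsBimoduleAction L R) {p q : 𝒜}
    (hp : IsIdempotentElem p) (hq : IsIdempotentElem q) (b : 𝒜) :
    L p (R q (D (p * b * q))) = L p (R q (D b + L b (D q) + R b (D p))) := by
  have left_idem (x : 𝔛) : L p (L p x) = L p x := by rw [← hLR.left_mul, hp.eq]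
  have right_idem (x : 𝔛) : R q (R q x) = R q x := by rw [← hLR.right_mul, hq.eq]
  rw [hD, hD, hLR.left_mul]
  simp only [map_add, right_idem, ← hLR.left_right_comm, left_idem]
  abel

theorem eq_compression_add (hD : IsBimoduleDerivation L R D) (hLR : IsBimoduleAction L R) :
    D = (L 1 ∘ₗ R 1 ∘ₗ D) + (L.flip (D 1) + R.flip (D 1)) := by
  ext a
  have left_one : D a = L 1 (D a) + R a (D 1) := by simpa using hD 1 a
  have right_one : D a = L a (D 1) + R 1 (D a) := by simpa using hD a 1
  have right_one_map : R 1 (D a) = L 1 (R 1 (D a)) + R a (D 1) := by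
    rw [hLR.left_right_comm, ← mul_one a, hLR.right_mul, ← map_add, mul_one, ← left_one]
  calc D a = L a (D 1) + (L 1 (R 1 (D a)) + R a (D 1)) := by rw [← right_one_map, ← right_one]
    _ = L 1 (R 1 (D a)) + (L a (D 1) + R a (D 1)) := add_left_comm _ _ _

end IsBimoduleDerivation

end Derivation

theorem abs_apply_apply_le_of_nonneg {𝕜 A X Y : Type*} [CommRing 𝕜]
    [AddCommGroup A] [PartialOrder A] [IsOrderedAddMonoid A] [Module 𝕜 A]
    [AddCommGroup X] [Lattice X] [IsOrderedAddMonoid X] [Module 𝕜 X]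
    [AddCommGroup Y] [Lattice Y] [IsOrderedAddMonoid Y] [Module 𝕜 Y]
    {L : A →ₗ[𝕜] X →ₗ[𝕜] Y} (hL : ∀ a x, 0 ≤ a → 0 ≤ x → 0 ≤ L a x)
    {a b : A} {x y : X} (hb : 0 ≤ b) (hba : b ≤ a) (hxy : |x| ≤ y) : |L b x| ≤ L a y := by
  have monotone_left : Monotone (L b) := (monotone_iff_map_nonneg _).2 fun z hz ↦ hL b z hb hz
  have monotone_flip : Monotone (L.flip y) :=
    (monotone_iff_map_nonneg _).2 fun c hc ↦ hL c y hc ((abs_nonneg x).trans hxy)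
  refine le_trans (abs_le'.2 ⟨?_, ?_⟩) (monotone_flip hba)
  · exact monotone_left ((le_abs_self x).trans hxy)
  · rw [← map_neg]
    exact monotone_left ((neg_le_abs x).trans hxy)

section RieszModule

variable {𝕜 𝒜 𝔛 I : Type*} [Ring 𝒜] [AddCommGroup 𝔛] [Lattice 𝔛]

/-- `𝔛` is a Riesz `𝒜`-module with products `a·x = L a x` and `x·a = R a x`. -/
structure IsRieszBimoduleAction [CommRing 𝕜] [PartialOrder 𝒜] [Module 𝕜 𝒜] [Module 𝕜 𝔛]
    (L R : 𝒜 →ₗ[𝕜] 𝔛 →ₗ[𝕜] 𝔛) : Prop extends IsBimoduleAction L R where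
  left_nonneg : ∀ a x, 0 ≤ a → 0 ≤ x → 0 ≤ L a x
  right_nonneg : ∀ a x, 0 ≤ a → 0 ≤ x → 0 ≤ R a x

/-- Every compression `1·x·1` with `0 ≤ x` is the supremum of the finite blocks
`(∑ i ∈ F, p i)·x·(∑ i ∈ G, p i)`: the family `p` exhausts the bimodule in order. -/
def IsOrderExhausting [CommRing 𝕜] [Module 𝕜 𝒜] [Module 𝕜 𝔛] (L R : 𝒜 →ₗ[𝕜] 𝔛 →ₗ[𝕜] 𝔛)
    (p : I → 𝒜) : Prop :=
  ∀ x : 𝔛, 0 ≤ x →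
    IsLUB {y : 𝔛 | ∃ F G : Finset I, y = L (∑ i ∈ F, p i) (R (∑ i ∈ G, p i) x)} (L 1 (R 1 x))

theorem IsOrderExhausting.compression_nonneg [IsOrderedAddMonoid 𝔛] [CommRing 𝕜] [Module 𝕜 𝒜]
    [Module 𝕜 𝔛] {L R : 𝒜 →ₗ[𝕜] 𝔛 →ₗ[𝕜] 𝔛} {p : I → 𝒜} (hp : IsOrderExhausting L R p) {w : 𝔛}
    (hw : ∀ i j, 0 ≤ L (p i) (R (p j) w)) : 0 ≤ L 1 (R 1 w) := by
  have split (a b : 𝒜) : L a (R b w) = L a (R b w⁺) - L a (R b w⁻) := by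
    rw [← map_sub, ← map_sub, posPart_sub_negPart]
  have block_nonneg (F G : Finset I) : 0 ≤ L (∑ i ∈ F, p i) (R (∑ j ∈ G, p j) w) := by
    simp only [map_sum, LinearMap.sum_apply]
    exact Finset.sum_nonneg fun j _ ↦ Finset.sum_nonneg fun i _ ↦ hw _ _
  rw [split, sub_nonneg]
  refine (hp w⁻ (negPart_nonneg w)).2 ?_
  rintro _ ⟨F, G, rfl⟩
  calc L (∑ i ∈ F, p i) (R (∑ j ∈ G, p j) w⁻)
      ≤ L (∑ i ∈ F, p i) (R (∑ j ∈ G, p j) w⁺) := sub_nonneg.1 (split _ _ ▸ block_nonneg F G)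
    _ ≤ L 1 (R 1 w⁺) := (hp w⁺ (posPart_nonneg w)).1 ⟨F, G, rfl⟩

variable [IsOrderedAddMonoid 𝔛] [Field 𝕜] [LinearOrder 𝕜] [IsStrictOrderedRing 𝕜]
  [PartialOrder 𝒜] [IsOrderedRing 𝒜] [Module 𝕜 𝒜] [IsOrderedModule 𝕜 𝒜]
  [Module 𝕜 𝔛] [IsOrderedModule 𝕜 𝔛]
  {L R : 𝒜 →ₗ[𝕜] 𝔛 →ₗ[𝕜] 𝔛} {D : 𝒜 →ₗ[𝕜] 𝔛} {a b : 𝒜} {M : 𝔛}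

theorem IsBimoduleDerivation.corner_le (hD : IsBimoduleDerivation L R D)
    (hLR : IsRieszBimoduleAction L R) {p q : 𝒜} (hp : 0 ≤ p) (hq : 0 ≤ q)
    (hp_idem : IsIdempotentElem p) (hq_idem : IsIdempotentElem q)
    (hdim : ∃ u : 𝒜, ∀ c : 𝒜, ∃ t : 𝕜, p * c * q = t • u)
    (hDp : |D p| ≤ M) (hDq : |D q| ≤ M) (hb : 0 ≤ b) (hba : b ≤ a) :
    L p (R q (D b)) ≤ L p (R q (|D a| + (L a M + R a M) + (L a M + R a M))) := by
  set N := L a M + R a M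
  let Φ : 𝔛 →ₗ[𝕜] 𝔛 := L p ∘ₗ R q
  let E (c : 𝒜) : 𝔛 := L c (D q) + R c (D p)
  have Φ_monotone : Monotone Φ :=
    (monotone_iff_map_nonneg Φ).2 fun x hx ↦ hLR.left_nonneg p _ hp (hLR.right_nonneg q x hq hx)
  have abs_E_le (c : 𝒜) (hc : 0 ≤ c) (hca : c ≤ a) : |E c| ≤ N :=
    (abs_add_le _ _).trans (add_le_add (abs_apply_apply_le_of_nonneg hLR.left_nonneg hc hca hDq)
      (abs_apply_apply_le_of_nonneg hLR.right_nonneg hc hca hDp))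
  have N_nonneg : 0 ≤ N := (abs_nonneg _).trans (abs_E_le b hb hba)
  have Φ_corner (c : 𝒜) : Φ (D (p * c * q)) = Φ (D c + E c) := by
    rw [← add_assoc]
    exact hD.corner_map_corner hLR.toIsBimoduleAction hp_idem hq_idem c
  obtain ⟨r, ⟨hr_nonneg, hr_le_one⟩, hr⟩ : ∃ r ∈ Icc (0 : 𝕜) 1, p * b * q = r • (p * a * q) := by
    obtain ⟨u, hu⟩ := hdim
    have mem_span (c : 𝒜) : p * c * q ∈ Submodule.span 𝕜 {u} :=
      Submodule.mem_span_singleton.2 ((hu c).imp fun _ ↦ Eq.symm)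
    exact exists_smul_eq_of_le_of_mem_span_singleton (mem_span b) (mem_span a)
      (mul_nonneg (mul_nonneg hp hb) hq) (by gcongr)
  have corner_E_le : Φ (D b + E b) ≤ Φ (|D a| + N) := calc
    Φ (D b + E b) = r • Φ (D a + E a) := by rw [← Φ_corner, ← Φ_corner, hr, map_smul, map_smul]
    _ ≤ r • Φ (|D a| + N) := smul_le_smul_of_nonneg_left (Φ_monotone (add_le_add (le_abs_self _)
      ((le_abs_self _).trans (abs_E_le a (hb.trans hba) le_rfl)))) hr_nonneg
    _ ≤ Φ (|D a| + N) := smul_le_of_le_one_left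
      ((monotone_iff_map_nonneg Φ).1 Φ_monotone _ (add_nonneg (abs_nonneg _) N_nonneg)) hr_le_one
  calc Φ (D b) = Φ (D b + E b) + Φ (-E b) := by rw [← map_add, add_neg_cancel_right]
    _ ≤ Φ (|D a| + N) + Φ N :=
      add_le_add corner_E_le (Φ_monotone ((neg_le_abs _).trans (abs_E_le b hb hba)))
    _ = Φ (|D a| + N + N) := (map_add _ _ _).symm

theorem IsBimoduleDerivation.bddAbove_compression_image_Icc (hD : IsBimoduleDerivation L R D)
    (hLR : IsRieszBimoduleAction L R) {p : I → 𝒜} (hp : ∀ i, 0 ≤ p i)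
    (hp_idem : ∀ i, IsIdempotentElem (p i))
    (hdim : ∀ i j, ∃ u : 𝒜, ∀ c : 𝒜, ∃ t : 𝕜, p i * c * p j = t • u)
    (hp_exh : IsOrderExhausting L R p) (hM : ∀ i, |D (p i)| ≤ M) (a : 𝒜) :
    BddAbove ((L 1 ∘ₗ R 1 ∘ₗ D) '' Icc 0 a) := by
  refine ⟨L 1 (R 1 (|D a| + (L a M + R a M) + (L a M + R a M))), ?_⟩
  rintro _ ⟨b, ⟨hb, hba⟩, rfl⟩
  refine sub_nonneg.1 ?_
  rw [LinearMap.comp_apply, LinearMap.comp_apply, ← map_sub, ← map_sub]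
  refine hp_exh.compression_nonneg fun i j ↦ ?_
  rw [map_sub, map_sub, sub_nonneg]
  exact hD.corner_le hLR (hp i) (hp j) (hp_idem i) (hp_idem j) (hdim i j) (hM i) (hM j) hb hba

end RieszModule

theorem derivation_regular_iff_bddAbove_general {𝒜 𝔛 I : Type*}
    [Ring 𝒜] [Lattice 𝒜] [IsOrderedRing 𝒜] [Module ℝ 𝒜] [IsOrderedModule ℝ 𝒜]
    [AddCommGroup 𝔛] [Lattice 𝔛] [IsOrderedAddMonoid 𝔛] [Module ℝ 𝔛] [IsOrderedModule ℝ 𝔛]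
    (h𝔛 : ∀ S : Set 𝔛, S.Nonempty → BddAbove S → ∃ b, IsLUB S b)
    {L R : 𝒜 →ₗ[ℝ] 𝔛 →ₗ[ℝ] 𝔛} (hLR : IsRieszBimoduleAction L R)
    {p : I → 𝒜} (hp : ∀ i, 0 ≤ p i) (hp_idem : ∀ i, IsIdempotentElem (p i))
    (hp_sum : ∀ F : Finset I, ∑ i ∈ F, p i ≤ 1)
    (hdim : ∀ i j, ∃ u : 𝒜, ∀ a : 𝒜, ∃ c : ℝ, p i * a * p j = c • u)
    (hp_exh : IsOrderExhausting L R p)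
    {D : 𝒜 →ₗ[ℝ] 𝔛} (hD : IsBimoduleDerivation L R D) :
    List.TFAE [IsRegularLinearMap D,
      BddAbove {y : 𝔛 | ∃ F : Finset I, y = ∑ i ∈ F, |D (p i)|},
      BddAbove (range fun i ↦ |D (p i)|)] := by
  tfae_have 1 → 2 := fun hreg ↦ hreg.bddAbove_sum_abs hp hp_sum
  tfae_have 2 → 3 := BddAbove.mono (range_subset_iff.2 fun i ↦ ⟨{i}, by simp⟩)
  tfae_have 3 → 1 := by
    rintro ⟨M, hM⟩
    have compression_regular : IsRegularLinearMap (L 1 ∘ₗ R 1 ∘ₗ D) :=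
      isRegularLinearMap_of_bddAbove_image_Icc h𝔛 fun a _ ↦
        hD.bddAbove_compression_image_Icc hLR hp hp_idem hdim hp_exh (forall_mem_range.1 hM) a
    rw [hD.eq_compression_add hLR.toIsBimoduleAction]
    exact compression_regular.add
      ((IsRegularLinearMap.flip_of_nonneg hLR.left_nonneg (D 1)).add
        (IsRegularLinearMap.flip_of_nonneg hLR.right_nonneg (D 1)))
  tfae_finish

theorem derivation_regular_iff_bddAbove
    {𝒜 𝔛 : Type*} {I : Type*}
    [Ring 𝒜] [Lattice 𝒜] [Module ℝ 𝒜]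
    [AddCommGroup 𝔛] [Lattice 𝔛] [Module ℝ 𝔛]
    -- 𝒜 is a (real) Riesz algebra (with identity e = 1):
    (h𝒜add : ∀ a b c : 𝒜, a ≤ b → a + c ≤ b + c)
    (h𝒜smul : ∀ (r : ℝ) (a : 𝒜), 0 ≤ r → 0 ≤ a → 0 ≤ r • a)
    (h𝒜mul : ∀ a b : 𝒜, 0 ≤ a → 0 ≤ b → 0 ≤ a * b)
    -- 𝔛 is a Riesz space:
    (h𝔛add : ∀ x y z : 𝔛, x ≤ y → x + z ≤ y + z)
    (h𝔛smul : ∀ (r : ℝ) (x : 𝔛), 0 ≤ r → 0 ≤ x → 0 ≤ r • x)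
    -- 𝔛 is order complete:
    (h𝔛oc : ∀ S : Set 𝔛, S.Nonempty → BddAbove S → ∃ b, IsLUB S b)
    -- 𝔛 is a Riesz 𝒜-module with module products L (left) and R (right):
    (L : 𝒜 →ₗ[ℝ] 𝔛 →ₗ[ℝ] 𝔛) (R : 𝒜 →ₗ[ℝ] 𝔛 →ₗ[ℝ] 𝔛)
    (hLmul : ∀ (a b : 𝒜) (x : 𝔛), L (a * b) x = L a (L b x))
    (hRmul : ∀ (a b : 𝒜) (x : 𝔛), R (a * b) x = R b (R a x))
    (hLR : ∀ (a b : 𝒜) (x : 𝔛), L a (R b x) = R b (L a x))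
    (hLpos : ∀ (a : 𝒜) (x : 𝔛), 0 ≤ a → 0 ≤ x → 0 ≤ L a x)
    (hRpos : ∀ (a : 𝒜) (x : 𝔛), 0 ≤ a → 0 ≤ x → 0 ≤ R a x)
    -- {p i : i ∈ I} is a set of pairwise orthogonal o-minimal idempotents:
    (p : I → 𝒜)
    (hppos : ∀ i, 0 ≤ p i)
    (hpidem : ∀ i, p i * p i = p i)
    (hportho : ∀ i j, i ≠ j → p i * p j = 0)
    (hominimal : ∀ i, ∀ a : 𝒜, ∃ c : ℝ, p i * a * p i = c • p i)
    -- sup of the finite partial sums of the p i is the identity: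
    (hsupone : IsLUB {s : 𝒜 | ∃ F : Finset I, s = ∑ i ∈ F, p i} 1)
    -- dim (p i) 𝒜 (p j) ≤ 1:
    (hdim : ∀ i j : I, ∃ u : 𝒜, ∀ a : 𝒜, ∃ c : ℝ, p i * a * p j = c • u)
    -- for every x ∈ 𝔛₊, sup over finite F, G of (∑_{i∈F} p i)·x·(∑_{i∈G} p i) is e·x·e:
    (hsupx : ∀ x : 𝔛, 0 ≤ x →
      IsLUB {y : 𝔛 | ∃ F G : Finset I, y = L (∑ i ∈ F, p i) (R (∑ i ∈ G, p i) x)}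
        (L 1 (R 1 x)))
    -- D is a derivation:
    (D : 𝒜 →ₗ[ℝ] 𝔛)
    (hD : ∀ a b : 𝒜, D (a * b) = L a (D b) + R b (D a)) :
    IsRegularLinearMap D ↔
      BddAbove {y : 𝔛 | ∃ F : Finset I, y = ∑ i ∈ F, |D (p i)|} := by
  have : IsOrderedAddMonoid 𝒜 := { add_le_add_left := fun a b h c ↦ h𝒜add a b c h }
  have : IsOrderedAddMonoid 𝔛 := { add_le_add_left := fun x y h z ↦ h𝔛add x y z h }
  have : ZeroLEOneClass 𝒜 := ⟨hsupone.1 ⟨∅, by simp⟩⟩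
  have : IsOrderedRing 𝒜 := .of_mul_nonneg h𝒜mul
  have : IsOrderedModule ℝ 𝒜 := .of_smul_nonneg fun r hr a ↦ h𝒜smul r a hr
  have : IsOrderedModule ℝ 𝔛 := .of_smul_nonneg fun r hr x ↦ h𝔛smul r x hr
  exact (derivation_regular_iff_bddAbove_general h𝔛oc ⟨⟨hLmul, hRmul, hLR⟩, hLpos, hRpos⟩ hppos
    hpidem (fun F ↦ hsupone.1 ⟨F, rfl⟩) hdim hsupx hD).out 0 1
end

section
/- Let 𝒜 be a Riesz algebra, let p and q be positive idempotents of 𝒜 with dim(p𝒜q) ≤ 1, let 𝔛 be a Riesz 𝒜-module and let D : 𝒜 → 𝔛 be a derivation. Then for every a ∈ 𝒜₊ and every t ∈ 𝒜 with |t| ≤ a, one has |p·D(ptq)·q| ≤ |p·D(paq)·q|. -/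
/-!
The elements `p * t * q` and `p * a * q` lie on a common line, and `|t| ≤ a` puts the first between
`-(p * a * q)` and `p * a * q`. Hence `p * t * q = c • (p * a * q)` with `|c| ≤ 1`. Every linear map
into a Riesz space carries such a relation to `|f (p * t * q)| ≤ |f (p * a * q)|`; the theorem is
the case `f x = p · D x · q`.
-/

section OrderedRing

variable {A : Type*} [NonUnitalNonAssocRing A] [PartialOrder A] [IsOrderedAddMonoid A]

theorem posMulMono_of_mul_nonneg (h : ∀ a b : A, 0 ≤ a → 0 ≤ b → 0 ≤ a * b) : PosMulMono A where
  mul_le_mul_of_nonneg_left a ha b c hbc :=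
    sub_nonneg.1 <| mul_sub a c b ▸ h a (c - b) ha (sub_nonneg.2 hbc)

theorem mulPosMono_of_mul_nonneg (h : ∀ a b : A, 0 ≤ a → 0 ≤ b → 0 ≤ a * b) : MulPosMono A where
  mul_le_mul_of_nonneg_right a ha b c hbc :=
    sub_nonneg.1 <| sub_mul c b a ▸ h (c - b) a (sub_nonneg.2 hbc) ha

end OrderedRing

section LatticeOrderedModule

variable {R X : Type*} [Ring R] [LinearOrder R] [IsOrderedRing R]
  [AddCommGroup X] [Lattice X] [Module R X] [PosSMulMono R X]

theorem abs_smul_le_abs_smul_abs (c : R) (x : X) : |c • x| ≤ |c| • |x| := by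
  have of_nonneg (r : R) (hr : 0 ≤ r) : |r • x| ≤ r • |x| :=
    abs_le'.2 ⟨smul_le_smul_of_nonneg_left (le_abs_self x) hr,
      smul_neg r x ▸ smul_le_smul_of_nonneg_left (neg_le_abs x) hr⟩
  rcases le_total 0 c with hc | hc
  · rw [abs_of_nonneg hc]
    exact of_nonneg c hc
  · rw [abs_of_nonpos hc, ← abs_neg, ← neg_smul]
    exact of_nonneg (-c) (neg_nonneg.2 hc)

theorem abs_smul_le_abs_of_abs_le_one [IsOrderedAddMonoid X] {c : R} (hc : |c| ≤ 1) (x : X) :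
    |c • x| ≤ |x| :=
  calc
    |c • x| ≤ |c| • |x| := abs_smul_le_abs_smul_abs c x
    _ ≤ (1 : R) • |x| := smul_le_smul_of_nonneg_right hc (abs_nonneg x)
    _ = |x| := one_smul R |x|

end LatticeOrderedModule

theorem mem_span_singleton_of_mem_span_singleton {K V : Type*} [DivisionRing K] [AddCommGroup V]
    [Module K V] {u x y : V} (hx : x ∈ K ∙ u) (hy : y ∈ K ∙ u) (hy0 : y ≠ 0) :
    x ∈ K ∙ y := by
  obtain ⟨d, rfl⟩ := Submodule.mem_span_singleton.1 hy
  rwa [Submodule.span_singleton_smul_eq (left_ne_zero_of_smul hy0).isUnit]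

section OrderedVectorSpace

variable {𝕜 E : Type*} [Field 𝕜] [LinearOrder 𝕜] [IsStrictOrderedRing 𝕜]
  [AddCommGroup E] [PartialOrder E] [IsOrderedAddMonoid E] [Module 𝕜 E] [PosSMulMono 𝕜 E]

theorem abs_le_one_of_smul_mem_Icc {c : 𝕜} {y : E} (hy : 0 < y) (hc : c • y ∈ Set.Icc (-y) y) :
    |c| ≤ 1 := by
  have : PosSMulStrictMono 𝕜 E := PosSMulMono.toPosSMulStrictMono
  have neg_smul_le : (-c) • y ≤ y := neg_smul c y ▸ neg_le.1 hc.1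
  exact abs_le'.2 ⟨(smul_le_iff_le_one_left hy).1 hc.2, (smul_le_iff_le_one_left hy).1 neg_smul_le⟩

theorem exists_abs_le_one_smul_eq_of_mem_Icc {u x y : E} (hx : x ∈ 𝕜 ∙ u)
    (hy : y ∈ 𝕜 ∙ u) (hxy : x ∈ Set.Icc (-y) y) : ∃ c : 𝕜, |c| ≤ 1 ∧ c • y = x := by
  have two_smul_nonneg : 0 ≤ (2 : 𝕜) • y :=
    two_smul 𝕜 y ▸ neg_le_iff_add_nonneg.1 (hxy.1.trans hxy.2)
  have y_nonneg : 0 ≤ y := nonneg_of_smul_nonneg_of_pos_left two_smul_nonneg two_pos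
  rcases y_nonneg.eq_or_lt with rfl | y_pos
  · have x_eq_zero : x = 0 := by simpa using hxy
    exact ⟨0, by simp [x_eq_zero]⟩
  · obtain ⟨c, rfl⟩ :=
      Submodule.mem_span_singleton.1 (mem_span_singleton_of_mem_span_singleton hx hy y_pos.ne')
    exact ⟨c, abs_le_one_of_smul_mem_Icc y_pos hxy, rfl⟩

variable {X : Type*} [AddCommGroup X] [Lattice X] [IsOrderedAddMonoid X] [Module 𝕜 X]
  [PosSMulMono 𝕜 X]

theorem abs_map_le_abs_map_of_mem_span_singleton (f : E →ₗ[𝕜] X) {u x y : E}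
    (hx : x ∈ 𝕜 ∙ u) (hy : y ∈ 𝕜 ∙ u) (hxy : x ∈ Set.Icc (-y) y) : |f x| ≤ |f y| := by
  obtain ⟨c, hc, rfl⟩ := exists_abs_le_one_smul_eq_of_mem_Icc hx hy hxy
  rw [map_smul]
  exact abs_smul_le_abs_of_abs_le_one hc (f y)

end OrderedVectorSpace

theorem mul_mul_mem_Icc_neg_self {A : Type*} [NonUnitalNonAssocRing A] [PartialOrder A]
    [PosMulMono A] [MulPosMono A] {p q t a : A} (hp : 0 ≤ p) (hq : 0 ≤ q)
    (ht : t ∈ Set.Icc (-a) a) : p * t * q ∈ Set.Icc (-(p * a * q)) (p * a * q) := by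
  have mono {b c : A} (hbc : b ≤ c) : p * b * q ≤ p * c * q :=
    mul_le_mul_of_nonneg_right (mul_le_mul_of_nonneg_left hbc hp) hq
  exact ⟨by simpa only [mul_neg, neg_mul] using mono ht.1, mono ht.2⟩

theorem abs_pDq_monotone_general {𝕜 A X : Type*} [Field 𝕜] [LinearOrder 𝕜] [IsStrictOrderedRing 𝕜]
    [NonUnitalNonAssocRing A] [PartialOrder A] [IsOrderedAddMonoid A] [PosMulMono A] [MulPosMono A]
    [Module 𝕜 A] [PosSMulMono 𝕜 A]
    [AddCommGroup X] [Lattice X] [IsOrderedAddMonoid X] [Module 𝕜 X] [PosSMulMono 𝕜 X]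
    {p q u : A} (hp : 0 ≤ p) (hq : 0 ≤ q) (hu : ∀ a : A, p * a * q ∈ 𝕜 ∙ u)
    (f : A →ₗ[𝕜] X) {a t : A} (ht : t ∈ Set.Icc (-a) a) :
    |f (p * t * q)| ≤ |f (p * a * q)| :=
  abs_map_le_abs_map_of_mem_span_singleton f (hu t) (hu a) (mul_mul_mem_Icc_neg_self hp hq ht)

theorem abs_pDq_monotone
    {𝒜 𝔛 : Type*}
    [Ring 𝒜] [Lattice 𝒜] [Module ℝ 𝒜]
    [AddCommGroup 𝔛] [Lattice 𝔛] [Module ℝ 𝔛]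
    -- 𝒜 is a (real) Riesz algebra:
    (h𝒜add : ∀ a b c : 𝒜, a ≤ b → a + c ≤ b + c)
    (h𝒜smul : ∀ (r : ℝ) (a : 𝒜), 0 ≤ r → 0 ≤ a → 0 ≤ r • a)
    (h𝒜mul : ∀ a b : 𝒜, 0 ≤ a → 0 ≤ b → 0 ≤ a * b)
    -- 𝔛 is a Riesz space:
    (h𝔛add : ∀ x y z : 𝔛, x ≤ y → x + z ≤ y + z)
    (h𝔛smul : ∀ (r : ℝ) (x : 𝔛), 0 ≤ r → 0 ≤ x → 0 ≤ r • x)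
    -- 𝔛 is a Riesz 𝒜-module with module products L (left) and R (right):
    (L : 𝒜 →ₗ[ℝ] 𝔛 →ₗ[ℝ] 𝔛) (R : 𝒜 →ₗ[ℝ] 𝔛 →ₗ[ℝ] 𝔛)
    (hLmul : ∀ (a b : 𝒜) (x : 𝔛), L (a * b) x = L a (L b x))
    (hRmul : ∀ (a b : 𝒜) (x : 𝔛), R (a * b) x = R b (R a x))
    (hLR : ∀ (a b : 𝒜) (x : 𝔛), L a (R b x) = R b (L a x))
    (hLpos : ∀ (a : 𝒜) (x : 𝔛), 0 ≤ a → 0 ≤ x → 0 ≤ L a x)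
    (hRpos : ∀ (a : 𝒜) (x : 𝔛), 0 ≤ a → 0 ≤ x → 0 ≤ R a x)
    -- p and q are positive idempotents with dim(p𝒜q) ≤ 1:
    (p q : 𝒜) (hp : 0 ≤ p) (hq : 0 ≤ q) (hpidem : p * p = p) (hqidem : q * q = q)
    (hdim : ∃ u : 𝒜, ∀ a : 𝒜, ∃ c : ℝ, p * a * q = c • u)
    -- D is a derivation:
    (D : 𝒜 →ₗ[ℝ] 𝔛)
    (hD : ∀ a b : 𝒜, D (a * b) = L a (D b) + R b (D a)) :
    ∀ a : 𝒜, 0 ≤ a → ∀ t : 𝒜, |t| ≤ a →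
      |L p (R q (D (p * t * q)))| ≤ |L p (R q (D (p * a * q)))| := by
  have : IsOrderedAddMonoid 𝒜 := { add_le_add_left := fun a b hab c => h𝒜add a b c hab }
  have : IsOrderedAddMonoid 𝔛 := { add_le_add_left := fun x y hxy z => h𝔛add x y z hxy }
  have : PosMulMono 𝒜 := posMulMono_of_mul_nonneg h𝒜mul
  have : MulPosMono 𝒜 := mulPosMono_of_mul_nonneg h𝒜mul
  have : PosSMulMono ℝ 𝒜 := .of_smul_nonneg fun r hr a ha => h𝒜smul r a hr ha
  have : PosSMulMono ℝ 𝔛 := .of_smul_nonneg fun r hr x hx => h𝔛smul r x hr hx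
  intro a _ t hta
  obtain ⟨u, hu⟩ := hdim
  have mem_line (b : 𝒜) : p * b * q ∈ ℝ ∙ u :=
    Submodule.mem_span_singleton.2 <| (hu b).imp fun _ => Eq.symm
  have ht : t ∈ Set.Icc (-a) a := ⟨neg_le.1 ((neg_le_abs t).trans hta), (le_abs_self t).trans hta⟩
  exact abs_pDq_monotone_general hp hq mem_line (L p ∘ₗ R q ∘ₗ D) ht
end
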